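/- (Dimension-free Gaussian concentration from T₂) Let (𝒳,d) be a Polish metric space and suppose μ ∈ P(𝒳) satisfies T₂(C): W₂²(ν,μ) ≤ C H(ν|μ) for all ν ∈ P(𝒳). Then for every integer n ≥ 1: (i) the product measure μⁿ satisfies T₂(C) on (𝒳ⁿ, d₂), i.e. 𝒯_{d₂²}(ν,μⁿ) ≤ C H(ν|μⁿ) for all ν ∈ P(𝒳ⁿ); and (ii) for every Borel set A ⊆ 𝒳ⁿ with μⁿ(A) ≥ 1/2 and every r ≥ r₀ := √(C log 2), μⁿ(A^r) ≥ 1 − exp(−(r − r₀)²/C), where A^r is the enlargement of A for the metric d₂. -/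

import Mathlib

open MeasureTheory ENNReal

/-- The optimal transport cost `𝒯_c(ν, μ)` associated with the cost function `c`:
the infimum of `∫ c dπ` over all couplings `π` of `ν` and `μ`. -/
noncomputable def optCost {X : Type*} [MeasurableSpace X] (c : X → X → ℝ)
    (ν μ : Measure X) : ℝ≥0∞ :=
  ⨅ (π : Measure (X × X)) (_ : π.map Prod.fst = ν ∧ π.map Prod.snd = μ),
    ∫⁻ p, ENNReal.ofReal (c p.1 p.2) ∂π

open Classical in
/-- The relative entropy `H(ν|μ)`: it equals `∫ h(dν/dμ) dμ` with
`h(t) = t log t - t + 1 ≥ 0` if `ν ≪ μ`, and `+∞` otherwise.  For probability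
measures `ν ≪ μ` this coincides with `∫ log (dν/dμ) dν`. -/
noncomputable def relEntropy {X : Type*} [MeasurableSpace X] (ν μ : Measure X) : ℝ≥0∞ :=
  if ν ≪ μ then
    ∫⁻ x, ENNReal.ofReal ((ν.rnDeriv μ x).toReal * Real.log (ν.rnDeriv μ x).toReal
      - (ν.rnDeriv μ x).toReal + 1) ∂μ
  else ∞

/-- The `ℓ²`-product metric `d₂` on `𝒳ⁿ`. -/
noncomputable def l2ProdDist {X : Type*} [MetricSpace X] {n : ℕ} (x y : Fin n → X) : ℝ :=
  Real.sqrt (∑ i, dist (x i) (y i) ^ 2)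

/-!
Marton's coupling argument. For the tensorization, let `ν` be a law on `X × Y`. Couple its first
marginal with `μ₁`, couple the conditional law of the second coordinate with `μ₂`, and add the two
costs: by the chain rule the two relative entropies sum to that of `ν`. To choose the conditional
couplings without a measurable selection theorem, condition only on a quantization of the first
coordinate with countably many cells of diameter at most `δ`. The resulting coupling has the right
first marginal only after quantization. Gluing it to `ν` along the quantized coordinate costs an
error that vanishes with `δ`, and averaging over cells does not increase the entropy, by convexity.

For the concentration, let `B` be the complement of the `r`-enlargement of `A`. Conditioning `μ` on
`A` has relative entropy `log (1 / μ A)`, so `μ[|A]` is within `√(C log (1 / μ A))` of `μ` in `W₂`,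
hence in `W₁`, and likewise for `B`. Testing against the `1`-Lipschitz function `d(·, A)`, which
vanishes on `A` and is at least `r` on `B`, gives
`r ≤ √(C log (1 / μ A)) + √(C log (1 / μ B))`, a bound on `μ B` once `μ A ≥ 1/2`.
-/

open InformationTheory ProbabilityTheory

section Entropy

variable {X Y : Type*} [MeasurableSpace X] [MeasurableSpace Y]

lemma relEntropy_eq_klDiv (ν μ : Measure X) [IsFiniteMeasure ν] [IsFiniteMeasure μ] :
    relEntropy ν μ = klDiv ν μ := by
  simp only [relEntropy, klDiv_eq_lintegral_klFun, klFun_apply, add_sub_right_comm]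

lemma klDiv_cond (μ : Measure X) [IsProbabilityMeasure μ] {A : Set X} (hA : MeasurableSet A)
    (hμA : μ A ≠ 0) : klDiv μ[|A] μ = ENNReal.ofReal (Real.log (μ.real A)⁻¹) := by
  have : IsProbabilityMeasure μ[|A] := cond_isProbabilityMeasure hμA
  have hac : μ[|A] ≪ μ := cond_absolutelyContinuous
  have hdensity : μ[|A] = μ.withDensity (A.indicator fun _ => (μ A)⁻¹) := by
    rw [withDensity_indicator hA, withDensity_const, ProbabilityTheory.cond]
  have hrnDeriv : μ[|A].rnDeriv μ =ᵐ[μ] A.indicator fun _ => (μ A)⁻¹ := by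
    conv_lhs => rw [hdensity]
    exact Measure.rnDeriv_withDensity _ (measurable_const.indicator hA)
  have hllr : llr μ[|A] μ =ᵐ[μ[|A]] fun _ => Real.log (μ.real A)⁻¹ := by
    filter_upwards [hac.ae_le hrnDeriv, ae_cond_mem hA] with x hx hxA
    rw [llr, hx, Set.indicator_of_mem hxA, ENNReal.toReal_inv, measureReal_def]
  rw [klDiv_of_ac_of_integrable hac ((integrable_congr hllr).2 (integrable_const _)),
    integral_congr_ae hllr]
  simp

lemma lintegral_klDiv_le_klDiv_compProd [MeasurableSpace.CountableOrCountablyGenerated X Y]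
    (μ : Measure X) [IsFiniteMeasure μ] (κ η : Kernel X Y) [IsFiniteKernel κ] [IsFiniteKernel η] :
    ∫⁻ x, klDiv (κ x) (η x) ∂μ ≤ klDiv (μ ⊗ₘ κ) (μ ⊗ₘ η) := by
  by_cases hac : μ ⊗ₘ κ ≪ μ ⊗ₘ η
  swap
  · simp [klDiv_of_not_ac hac]
  have hac_ae : ∀ᵐ x ∂μ, κ x ≪ η x := hac.kernel_of_compProd
  have hdensity : μ ⊗ₘ κ = (μ ⊗ₘ η).withDensity fun p => κ.rnDeriv η p.1 p.2 := by
    ext s hs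
    rw [withDensity_apply _ hs, ← lintegral_indicator hs,
      Measure.lintegral_compProd ((κ.measurable_rnDeriv η).indicator hs),
      Measure.compProd_apply hs]
    refine lintegral_congr_ae ?_
    filter_upwards [hac_ae] with x hx
    conv_lhs => rw [← κ.withDensity_rnDeriv_eq hx]
    rw [Kernel.withDensity_apply' _ (κ.measurable_rnDeriv η),
      ← lintegral_indicator (measurable_prodMk_left hs)]
    rfl
  have hrnDeriv : (μ ⊗ₘ κ).rnDeriv (μ ⊗ₘ η) =ᵐ[μ ⊗ₘ η] fun p => κ.rnDeriv η p.1 p.2 := by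
    conv_lhs => rw [hdensity]
    exact Measure.rnDeriv_withDensity _ (κ.measurable_rnDeriv η)
  rw [klDiv_eq_lintegral_klFun_of_ac hac, Measure.lintegral_compProd (by fun_prop)]
  refine lintegral_mono_ae ?_
  filter_upwards [hac_ae, Measure.ae_ae_of_ae_compProd hrnDeriv] with x hx hrn
  rw [klDiv_eq_lintegral_klFun_of_ac hx]
  refine (lintegral_congr_ae ?_).le
  filter_upwards [hrn, κ.rnDeriv_eq_rnDeriv_measure (η := η) (a := x)] with y hy hy'
  rw [hy, hy']

lemma klDiv_fst_add_lintegral_klDiv_condDistrib_le [StandardBorelSpace Y] [Nonempty Y]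
    {ι : Type*} [MeasurableSpace ι] {q : X → ι} (hq : Measurable q)
    (ν : Measure (X × Y)) (μ₁ : Measure X) (μ₂ : Measure Y)
    [IsProbabilityMeasure ν] [IsFiniteMeasure μ₁] [IsProbabilityMeasure μ₂] :
    klDiv ν.fst μ₁ +
        ∫⁻ i, klDiv (condDistrib Prod.snd (fun p => q p.1) ν i) μ₂ ∂(ν.map fun p => q p.1) ≤
      klDiv ν (μ₁.prod μ₂) := by
  have hchain : klDiv ν (μ₁.prod μ₂) = klDiv ν.fst μ₁ + klDiv ν (ν.fst.prod μ₂) := by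
    have h := klDiv_compProd_eq_add ν.fst μ₁ ν.condKernel (Kernel.const X μ₂)
    rwa [ν.disintegrate ν.condKernel, Measure.compProd_const, Measure.compProd_const] at h
  rw [hchain]
  gcongr
  have hlaw : (ν.fst.prod μ₂).map (Prod.map q id) = (ν.map fun p => q p.1).prod μ₂ := by
    rw [← Measure.map_prod_map _ _ hq measurable_id, Measure.map_id, Measure.fst,
      Measure.map_map hq measurable_fst]
    rfl
  calc ∫⁻ i, klDiv (condDistrib Prod.snd (fun p => q p.1) ν i) μ₂ ∂(ν.map fun p => q p.1)
      ≤ klDiv ((ν.map fun p => q p.1) ⊗ₘ condDistrib Prod.snd (fun p => q p.1) ν)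
          ((ν.map fun p => q p.1) ⊗ₘ Kernel.const ι μ₂) :=
        lintegral_klDiv_le_klDiv_compProd _ _ (Kernel.const ι μ₂)
    _ = klDiv (ν.map (Prod.map q id)) ((ν.fst.prod μ₂).map (Prod.map q id)) := by
        rw [compProd_map_condDistrib measurable_snd.aemeasurable, Measure.compProd_const, hlaw]
        rfl
    _ ≤ klDiv ν (ν.fst.prod μ₂) := klDiv_map_le _ _ (hq.prodMap measurable_id)

end Entropy

section Coupling

variable {X Y : Type*} [MeasurableSpace X] [MeasurableSpace Y] {c : X → X → ℝ} {ν μ : Measure X}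

lemma optCost_le {π : Measure (X × X)} (hν : π.map Prod.fst = ν) (hμ : π.map Prod.snd = μ) :
    optCost c ν μ ≤ ∫⁻ p, ENNReal.ofReal (c p.1 p.2) ∂π :=
  iInf₂_le π ⟨hν, hμ⟩

lemma exists_coupling_lintegral_le_add [IsProbabilityMeasure ν] [IsProbabilityMeasure μ]
    {K ε : ℝ≥0∞} (hK : optCost c ν μ ≤ K) (hε : ε ≠ 0) :
    ∃ π : Measure (X × X), π.map Prod.fst = ν ∧ π.map Prod.snd = μ ∧
      ∫⁻ p, ENNReal.ofReal (c p.1 p.2) ∂π ≤ K + ε := by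
  obtain rfl | hK_top := eq_or_ne K ∞
  · exact ⟨ν.prod μ, by simp, by simp, by simp⟩
  have hlt : optCost c ν μ < K + ε := hK.trans_lt (ENNReal.lt_add_right hK_top hε)
  simp only [optCost, iInf_lt_iff] at hlt
  obtain ⟨π, ⟨hν, hμ⟩, hπ⟩ := hlt
  exact ⟨π, hν, hμ, hπ.le⟩

lemma optCost_comm (hc : ∀ x y, c x y = c y x) (ν μ : Measure X) :
    optCost c ν μ = optCost c μ ν := by
  suffices h : ∀ ν μ : Measure X, optCost c ν μ ≤ optCost c μ ν from le_antisymm (h ν μ) (h μ ν)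
  refine fun ν μ => le_iInf₂ fun π hπ => ?_
  calc optCost c ν μ
      ≤ ∫⁻ p, ENNReal.ofReal (c p.1 p.2) ∂(π.map Prod.swap) :=
        optCost_le (by rw [Measure.map_map measurable_fst measurable_swap]; exact hπ.2)
          (by rw [Measure.map_map measurable_snd measurable_swap]; exact hπ.1)
    _ ≤ ∫⁻ p, ENNReal.ofReal (c p.2 p.1) ∂π := lintegral_map_le _ _
    _ = ∫⁻ p, ENNReal.ofReal (c p.1 p.2) ∂π := by simp only [hc]

lemma optCost_map_le {f : X → Y} (hf : Measurable f) (c : Y → Y → ℝ) (ν μ : Measure X) :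
    optCost c (ν.map f) (μ.map f) ≤ optCost (fun x x' => c (f x) (f x')) ν μ := by
  refine le_iInf₂ fun π hπ => ?_
  have hff : Measurable (Prod.map f f) := hf.prodMap hf
  refine (optCost_le (π := π.map (Prod.map f f)) ?_ ?_).trans (lintegral_map_le _ _)
  · rw [← hπ.1, Measure.map_map measurable_fst hff, Measure.map_map hf measurable_fst]
    rfl
  · rw [← hπ.2, Measure.map_map measurable_snd hff, Measure.map_map hf measurable_snd]
    rfl

lemma compProd_comap_map_prodMap {Z W : Type*} [MeasurableSpace Z] [MeasurableSpace W] {f : X → Y}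
    {g : Z → W} (hf : Measurable f) (hg : Measurable g) (μ : Measure X) [SFinite μ]
    (κ : Kernel Y Z) [IsSFiniteKernel κ] :
    (μ ⊗ₘ κ.comap f hf).map (Prod.map f g) = μ.map f ⊗ₘ κ.map g := by
  ext s hs
  rw [Measure.map_apply (hf.prodMap hg) hs, Measure.compProd_apply (hf.prodMap hg hs),
    Measure.compProd_apply hs, lintegral_map (Kernel.measurable_kernel_prodMk_left hs) hf]
  simp only [Kernel.map_apply' _ hg _ (measurable_prodMk_left hs)]
  rfl

lemma compProd_map_prodMap_of_map_eq_const {Z W : Type*} [MeasurableSpace Z] [MeasurableSpace W]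
    {f : X → Y} {g : Z → W} (hf : Measurable f) (hg : Measurable g) (μ : Measure X) [SFinite μ]
    {κ : Kernel X Z} [IsSFiniteKernel κ] {ν : Measure W} [SFinite ν]
    (hκ : κ.map g = Kernel.const X ν) :
    (μ ⊗ₘ κ).map (Prod.map f g) = (μ.map f).prod ν := by
  calc (μ ⊗ₘ κ).map (Prod.map f g)
      = ((μ ⊗ₘ κ).map (Prod.map id g)).map (Prod.map f id) := by
        rw [Measure.map_map (hf.prodMap measurable_id) (measurable_id.prodMap hg)]
        rfl
    _ = (μ.prod ν).map (Prod.map f id) := by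
        rw [← Measure.compProd_map hg, hκ, Measure.compProd_const]
    _ = (μ.map f).prod ν := by rw [← Measure.map_prod_map _ _ hf measurable_id, Measure.map_id]

lemma lintegral_compProd_add {φ : X → ℝ≥0∞} {ψ : Y → ℝ≥0∞} (hφ : Measurable φ)
    (hψ : Measurable ψ) (μ : Measure X) [SFinite μ] (κ : Kernel X Y) [IsMarkovKernel κ] :
    ∫⁻ p, (φ p.1 + ψ p.2) ∂(μ ⊗ₘ κ) = ∫⁻ x, φ x ∂μ + ∫⁻ x, ∫⁻ y, ψ y ∂κ x ∂μ := by
  rw [Measure.lintegral_compProd (by fun_prop), ← lintegral_add_left hφ]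
  simp only [lintegral_add_left measurable_const, lintegral_const, measure_univ, mul_one]

lemma exists_gluing {E : Type*} [MeasurableSpace E] [MeasurableEq E]
    [StandardBorelSpace Y] [Nonempty Y] {P : Measure X} {Q : Measure Y} [IsFiniteMeasure P]
    [IsFiniteMeasure Q] {f : X → E} {g : Y → E} (hf : Measurable f) (hg : Measurable g)
    (hfg : P.map f = Q.map g) :
    ∃ ρ : Measure (X × Y), ρ.map Prod.fst = P ∧ ρ.map Prod.snd = Q ∧ ∀ᵐ z ∂ρ, f z.1 = g z.2 := by
  let ρ := P ⊗ₘ (condDistrib id g Q).comap f hf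
  have hlaw : ρ.map (Prod.map f id) = Q.map fun y => (g y, y) := by
    rw [compProd_comap_map_prodMap hf measurable_id, Kernel.map_id, hfg,
      compProd_map_condDistrib measurable_id.aemeasurable]
    rfl
  have hf' : Measurable (Prod.map f (id : Y → Y)) := hf.prodMap measurable_id
  have hg' : Measurable fun y => (g y, y) := hg.prodMk measurable_id
  refine ⟨ρ, Measure.fst_compProd _ _, ?_, ?_⟩
  · calc ρ.map Prod.snd = (ρ.map (Prod.map f id)).map Prod.snd := by
          rw [Measure.map_map measurable_snd hf']; rfl
      _ = Q := by rw [hlaw, Measure.map_map measurable_snd hg']; exact Measure.map_id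
  · have hdiag : ∀ᵐ w ∂ρ.map (Prod.map f id), w.1 = g w.2 := by
      rw [hlaw]
      exact (ae_map_iff hg'.aemeasurable
        (measurableSet_eq_fun measurable_fst (hg.comp measurable_snd))).2 (ae_of_all _ fun _ => rfl)
    exact ae_of_ae_map hf'.aemeasurable hdiag

lemma optCost_le_lintegral_of_map_eq {E : Type*} [MeasurableSpace E] [MeasurableEq E]
    [StandardBorelSpace Y] [Nonempty Y] {Q : Measure Y} [IsFiniteMeasure ν] [IsFiniteMeasure Q]
    {f : X → E} {g : Y → E} {s : Y → X} {F : Y → ℝ≥0∞} (hf : Measurable f) (hg : Measurable g)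
    (hs : Measurable s) (hF : Measurable F) (hfg : ν.map f = Q.map g) (hQ : Q.map s = μ)
    (hcF : ∀ x y, f x = g y → ENNReal.ofReal (c x (s y)) ≤ F y) :
    optCost c ν μ ≤ ∫⁻ y, F y ∂Q := by
  obtain ⟨ρ, hρ_fst, hρ_snd, hρ⟩ := exists_gluing hf hg hfg
  have hid_s : Measurable (Prod.map id s : X × Y → X × X) := measurable_id.prodMap hs
  calc optCost c ν μ
      ≤ ∫⁻ p, ENNReal.ofReal (c p.1 p.2) ∂ρ.map (Prod.map id s) := by
        refine optCost_le ?_ ?_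
        · rw [Measure.map_map measurable_fst hid_s, ← hρ_fst]
          rfl
        · rw [Measure.map_map measurable_snd hid_s, ← hQ, ← hρ_snd,
            Measure.map_map hs measurable_snd]
          rfl
    _ ≤ ∫⁻ z, ENNReal.ofReal (c z.1 (s z.2)) ∂ρ := lintegral_map_le _ _
    _ ≤ ∫⁻ z, F z.2 ∂ρ := lintegral_mono_ae (hρ.mono fun z hz => hcF _ _ hz)
    _ = ∫⁻ y, F y ∂Q := by rw [← hρ_snd, lintegral_map hF measurable_snd]

end Coupling

/-- The transport-entropy inequality `T_c(C)`: transporting any probability measure `ν` to `μ` costs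
at most `C` times the relative entropy of `ν` with respect to `μ`. For `c = d²` this is Talagrand's
inequality `T₂(C)`. The constant is `ℝ≥0∞`-valued since both sides of the inequality are. -/
def TransportEntropyIneq {X : Type*} [MeasurableSpace X] (C : ℝ≥0∞) (c : X → X → ℝ)
    (μ : Measure X) : Prop :=
  ∀ ν : Measure X, IsProbabilityMeasure ν → optCost c ν μ ≤ C * relEntropy ν μ

namespace TransportEntropyIneq

section Tensorization

variable {X Y : Type*} [MeasurableSpace X] [MeasurableSpace Y] {C : ℝ≥0∞}

lemma optCost_le_mul_klDiv {c : X → X → ℝ} {μ : Measure X} [IsFiniteMeasure μ]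
    (h : TransportEntropyIneq C c μ) (ν : Measure X) [IsProbabilityMeasure ν] :
    optCost c ν μ ≤ C * klDiv ν μ := by
  rw [← relEntropy_eq_klDiv]
  exact h ν inferInstance

lemma map_equiv {c : Y → Y → ℝ} {μ : Measure X} [IsFiniteMeasure μ] (e : X ≃ᵐ Y)
    (h : TransportEntropyIneq C (fun x x' => c (e x) (e x')) μ) :
    TransportEntropyIneq C c (μ.map e) := by
  intro ν _
  have : IsProbabilityMeasure (ν.map e.symm) :=
    Measure.isProbabilityMeasure_map e.symm.measurable.aemeasurable
  calc optCost c ν (μ.map e)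
      = optCost c ((ν.map e.symm).map e) (μ.map e) := by rw [e.map_map_symm]
    _ ≤ optCost (fun x x' => c (e x) (e x')) (ν.map e.symm) μ := optCost_map_le e.measurable _ _ _
    _ ≤ C * klDiv (ν.map e.symm) μ := h.optCost_le_mul_klDiv _
    _ = C * klDiv (ν.map e.symm) ((μ.map e).map e.symm) := by rw [e.map_symm_map]
    _ ≤ C * relEntropy ν (μ.map e) := by
        rw [relEntropy_eq_klDiv]
        gcongr
        exact klDiv_map_le _ _ e.symm.measurable

variable {ι : Type*} [MeasurableSpace ι] [Countable ι] [MeasurableSingletonClass ι]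
  {c₁ : X → X → ℝ} {c₂ : Y → Y → ℝ} {μ₁ : Measure X} {μ₂ : Measure Y}

lemma exists_coupling_kernel [IsProbabilityMeasure μ₂] (h₂ : TransportEntropyIneq C c₂ μ₂)
    (κ : Kernel ι Y) [IsMarkovKernel κ] {ε : ℝ≥0∞} (hε : ε ≠ 0) :
    ∃ Γ : Kernel ι (Y × Y), IsMarkovKernel Γ ∧ Γ.map Prod.fst = κ ∧
      Γ.map Prod.snd = Kernel.const ι μ₂ ∧
      ∀ i, ∫⁻ y, ENNReal.ofReal (c₂ y.1 y.2) ∂(Γ i) ≤ C * klDiv (κ i) μ₂ + ε := by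
  choose π hfst hsnd hπ using fun i =>
    exists_coupling_lintegral_le_add (h₂.optCost_le_mul_klDiv (κ i)) hε
  refine ⟨Kernel.ofFunOfCountable π, ⟨fun i => ?_⟩, ?_, ?_, hπ⟩
  · have : IsProbabilityMeasure ((π i).map Prod.fst) := (hfst i).symm ▸ inferInstance
    exact Measure.isProbabilityMeasure_of_map (μ := π i) Prod.fst
  · ext1 i
    rw [Kernel.map_apply _ measurable_fst, ← hfst i]
    rfl
  · ext1 i
    rw [Kernel.map_apply _ measurable_snd, Kernel.const_apply, ← hsnd i]
    rfl

lemma exists_quantized_coupling [StandardBorelSpace Y] [Nonempty Y] [IsProbabilityMeasure μ₁]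
    [IsProbabilityMeasure μ₂] (h₁ : TransportEntropyIneq C c₁ μ₁)
    (h₂ : TransportEntropyIneq C c₂ μ₂) (hc₁ : Measurable (Function.uncurry c₁))
    (hc₂ : Measurable (Function.uncurry c₂)) {q : X → ι} (hq : Measurable q)
    (ν : Measure (X × Y)) [IsProbabilityMeasure ν] {ε : ℝ≥0∞} (hε : ε ≠ 0) :
    ∃ Q : Measure ((X × X) × (Y × Y)), IsProbabilityMeasure Q ∧
      Q.map (fun w => (q w.1.1, w.2.1)) = ν.map (fun p => (q p.1, p.2)) ∧
      Q.map (fun w => (w.1.2, w.2.2)) = μ₁.prod μ₂ ∧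
      ∫⁻ w, (ENNReal.ofReal (c₁ w.1.1 w.1.2) + ENNReal.ofReal (c₂ w.2.1 w.2.2)) ∂Q ≤
        C * klDiv ν (μ₁.prod μ₂) + (ε + ε) := by
  let κ := condDistrib Prod.snd (fun p : X × Y => q p.1) ν
  obtain ⟨π, hπ_fst, hπ_snd, hπ⟩ :=
    exists_coupling_lintegral_le_add (h₁.optCost_le_mul_klDiv ν.fst) hε
  obtain ⟨Γ, _, hΓ_fst, hΓ_snd, hΓ⟩ := h₂.exists_coupling_kernel κ hε
  have : IsProbabilityMeasure (π.map Prod.fst) := hπ_fst ▸ inferInstance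
  have : IsProbabilityMeasure π := Measure.isProbabilityMeasure_of_map Prod.fst
  have hq₁ : Measurable fun u : X × X => q u.1 := hq.comp measurable_fst
  have hπ_q : π.map (fun u => q u.1) = ν.map fun p => q p.1 := by
    have h := congrArg (Measure.map q) hπ_fst
    rwa [Measure.fst, Measure.map_map hq measurable_fst, Measure.map_map hq measurable_fst] at h
  refine ⟨π ⊗ₘ Γ.comap _ hq₁, inferInstance, ?_, ?_, ?_⟩
  · calc (π ⊗ₘ Γ.comap _ hq₁).map (fun w => (q w.1.1, w.2.1))
        = π.map (fun u => q u.1) ⊗ₘ Γ.map Prod.fst :=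
          compProd_comap_map_prodMap hq₁ measurable_fst π Γ
      _ = ν.map fun p => (q p.1, p.2) := by
          rw [hΓ_fst, hπ_q, compProd_map_condDistrib measurable_snd.aemeasurable]
  · have hΓ_snd' : (Γ.comap _ hq₁).map Prod.snd = Kernel.const (X × X) μ₂ := by
      rw [← Kernel.comap_map_comm _ _ measurable_snd, hΓ_snd]
      rfl
    rw [← hπ_snd]
    exact compProd_map_prodMap_of_map_eq_const measurable_snd measurable_snd π hΓ_snd'
  · have hentropy : Measurable fun u : X × X => klDiv (κ (q u.1)) μ₂ :=
      (measurable_of_countable fun i => klDiv (κ i) μ₂).comp hq₁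
    calc ∫⁻ w, (ENNReal.ofReal (c₁ w.1.1 w.1.2) + ENNReal.ofReal (c₂ w.2.1 w.2.2))
          ∂(π ⊗ₘ Γ.comap _ hq₁)
        = ∫⁻ u, ENNReal.ofReal (c₁ u.1 u.2) ∂π
          + ∫⁻ u, ∫⁻ y, ENNReal.ofReal (c₂ y.1 y.2) ∂Γ (q u.1) ∂π :=
          lintegral_compProd_add hc₁.ennreal_ofReal hc₂.ennreal_ofReal π (Γ.comap _ hq₁)
      _ ≤ (C * klDiv ν.fst μ₁ + ε) + ∫⁻ u, (C * klDiv (κ (q u.1)) μ₂ + ε) ∂π := by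
          gcongr with u
          exact hΓ _
      _ = C * (klDiv ν.fst μ₁ + ∫⁻ i, klDiv (κ i) μ₂ ∂(ν.map fun p => q p.1)) + (ε + ε) := by
          rw [← hπ_q, lintegral_map (measurable_of_countable _) hq₁,
            lintegral_add_right _ measurable_const, lintegral_const_mul _ hentropy]
          simp only [lintegral_const, measure_univ, mul_one]
          ring
      _ ≤ C * klDiv ν (μ₁.prod μ₂) + (ε + ε) := by
          gcongr
          exact klDiv_fst_add_lintegral_klDiv_condDistrib_le hq ν μ₁ μ₂

lemma optCost_prod_le_of_quantization [StandardBorelSpace X] [StandardBorelSpace Y]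
    [IsProbabilityMeasure μ₁] [IsProbabilityMeasure μ₂] (h₁ : TransportEntropyIneq C c₁ μ₁)
    (h₂ : TransportEntropyIneq C c₂ μ₂) (hc₁ : Measurable (Function.uncurry c₁))
    (hc₂ : Measurable (Function.uncurry c₂)) {q : X → ι} (hq : Measurable q) {a b : ℝ≥0∞}
    (hb : 1 ≤ b)
    (hqc : ∀ x x' z, q x = q x' →
      ENNReal.ofReal (c₁ x z) ≤ a + b * ENNReal.ofReal (c₁ x' z))
    (ν : Measure (X × Y)) [IsProbabilityMeasure ν] {ε : ℝ≥0∞} (hε : ε ≠ 0) :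
    optCost (fun p p' => c₁ p.1 p'.1 + c₂ p.2 p'.2) ν (μ₁.prod μ₂) ≤
      a + b * (C * klDiv ν (μ₁.prod μ₂) + (ε + ε)) := by
  obtain ⟨_, _⟩ := nonempty_prod.1 ν.nonempty_of_neZero
  obtain ⟨Q, _, hQ_fst, hQ_snd, hQ⟩ := h₁.exists_quantized_coupling h₂ hc₁ hc₂ hq ν hε
  let cost : (X × X) × (Y × Y) → ℝ≥0∞ := fun w =>
    ENNReal.ofReal (c₁ w.1.1 w.1.2) + ENNReal.ofReal (c₂ w.2.1 w.2.2)
  have hcost : Measurable cost :=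
    (hc₁.ennreal_ofReal.comp measurable_fst).add (hc₂.ennreal_ofReal.comp measurable_snd)
  calc optCost (fun p p' => c₁ p.1 p'.1 + c₂ p.2 p'.2) ν (μ₁.prod μ₂)
      ≤ ∫⁻ w, (a + b * cost w) ∂Q := by
        refine optCost_le_lintegral_of_map_eq (E := ι × Y) (by fun_prop) (by fun_prop)
          (by fun_prop) (by fun_prop) hQ_fst.symm hQ_snd ?_
        rintro ⟨x, y⟩ ⟨⟨x', x''⟩, ⟨y', y''⟩⟩ hxy
        obtain ⟨hqx, rfl⟩ := Prod.mk.inj hxy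
        calc ENNReal.ofReal (c₁ x x'' + c₂ y y'')
            ≤ ENNReal.ofReal (c₁ x x'') + 1 * ENNReal.ofReal (c₂ y y'') := by
              rw [one_mul]
              exact ENNReal.ofReal_add_le
          _ ≤ (a + b * ENNReal.ofReal (c₁ x' x'')) + b * ENNReal.ofReal (c₂ y y'') := by
              gcongr
              exact hqc _ _ _ hqx
          _ = a + b * cost ((x', x''), (y, y'')) := by rw [mul_add, add_assoc]
    _ = a + b * ∫⁻ w, cost w ∂Q := by
        rw [lintegral_add_left measurable_const, lintegral_const_mul _ hcost, lintegral_const,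
          measure_univ, mul_one]
    _ ≤ a + b * (C * klDiv ν (μ₁.prod μ₂) + (ε + ε)) := by gcongr

end Tensorization

section Product

lemma ofReal_dist_sq_le {X : Type*} [PseudoMetricSpace X] {δ : ℝ} {x x' : X} (hδ : 0 ≤ δ)
    (h : dist x x' ≤ δ) (z : X) :
    ENNReal.ofReal (dist x z ^ 2) ≤
      ENNReal.ofReal (δ ^ 2 + δ) + ENNReal.ofReal (1 + δ) * ENNReal.ofReal (dist x' z ^ 2) := by
  rw [← ENNReal.ofReal_mul (by positivity), ← ENNReal.ofReal_add (by positivity) (by positivity)]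
  refine ENNReal.ofReal_le_ofReal ?_
  calc dist x z ^ 2 ≤ (δ + dist x' z) ^ 2 := by
        gcongr
        linarith [dist_triangle x x' z]
    _ ≤ (δ ^ 2 + δ) + (1 + δ) * dist x' z ^ 2 := by
        nlinarith [mul_nonneg hδ (sq_nonneg (dist x' z - 1))]

variable {X Y : Type*} [PseudoMetricSpace X] [SecondCountableTopology X] [MeasurableSpace X]
  [MeasurableSpace Y] {C : ℝ≥0∞}

lemma exists_measurable_nat_dist_le [OpensMeasurableSpace X] {δ : ℝ} (hδ : 0 < δ) :
    ∃ q : X → ℕ, Measurable q ∧ ∀ x x', q x = q x' → dist x x' ≤ δ := by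
  obtain _ | _ := isEmpty_or_nonempty X
  · exact ⟨fun _ => 0, measurable_const, isEmptyElim⟩
  let u := TopologicalSpace.denseSeq X
  have hnear : ∀ x, ∃ k, dist x (u k) < δ / 2 := fun x =>
    (TopologicalSpace.denseRange_denseSeq X).exists_dist_lt x (half_pos hδ)
  classical
  refine ⟨fun x => Nat.find (hnear x),
    measurable_find hnear fun k => measurableSet_lt (by fun_prop) measurable_const,
    fun x x' (hxx' : Nat.find _ = Nat.find _) => ?_⟩
  have hx := Nat.find_spec (hnear x)
  have hx' := Nat.find_spec (hnear x')
  rw [← hxx'] at hx'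
  linarith [dist_triangle_right x x' (u (Nat.find (hnear x)))]

lemma prod [OpensMeasurableSpace X] [StandardBorelSpace X] [StandardBorelSpace Y]
    {c : Y → Y → ℝ} {μ₁ : Measure X} {μ₂ : Measure Y} [IsProbabilityMeasure μ₁]
    [IsProbabilityMeasure μ₂] (h₁ : TransportEntropyIneq C (fun x x' => dist x x' ^ 2) μ₁)
    (h₂ : TransportEntropyIneq C c μ₂) (hc : Measurable (Function.uncurry c)) :
    TransportEntropyIneq C (fun p p' : X × Y => dist p.1 p'.1 ^ 2 + c p.2 p'.2)
      (μ₁.prod μ₂) := by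
  intro ν _
  rw [relEntropy_eq_klDiv]
  have hdist : Measurable (Function.uncurry fun x x' : X => dist x x' ^ 2) :=
    measurable_dist.pow_const 2
  let bound : ℝ → ℝ≥0∞ := fun δ => ENNReal.ofReal (δ ^ 2 + δ) +
    ENNReal.ofReal (1 + δ) * (C * klDiv ν (μ₁.prod μ₂) + (ENNReal.ofReal δ + ENNReal.ofReal δ))
  have hbound : ∀ δ > 0,
      optCost (fun p p' => dist p.1 p'.1 ^ 2 + c p.2 p'.2) ν (μ₁.prod μ₂) ≤ bound δ := by
    intro δ hδ
    obtain ⟨q, hq, hqδ⟩ := exists_measurable_nat_dist_le (X := X) hδ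
    exact h₁.optCost_prod_le_of_quantization h₂ hdist hc hq (by simp [hδ.le])
      (fun x x' z hxx' => ofReal_dist_sq_le hδ.le (hqδ x x' hxx') z) ν (by simpa using hδ)
  have hlim : Filter.Tendsto bound (nhdsWithin 0 (Set.Ioi 0))
      (nhds (C * klDiv ν (μ₁.prod μ₂))) := by
    have hofReal : ∀ f : ℝ → ℝ, Continuous f → Filter.Tendsto (fun δ => ENNReal.ofReal (f δ))
        (nhdsWithin 0 (Set.Ioi 0)) (nhds (ENNReal.ofReal (f 0))) := fun f hf =>
      ((ENNReal.continuous_ofReal.comp hf).tendsto 0).mono_left nhdsWithin_le_nhds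
    have h := (hofReal (fun δ => δ ^ 2 + δ) (by fun_prop)).add
      (ENNReal.Tendsto.mul (hofReal (fun δ => 1 + δ) (by fun_prop)) (.inl (by simp))
        ((tendsto_const_nhds (x := C * klDiv ν (μ₁.prod μ₂))).add
          ((hofReal id continuous_id).add (hofReal id continuous_id)))
        (.inr (by simp)))
    simpa using h
  exact ge_of_tendsto hlim (eventually_nhdsWithin_of_forall hbound)

end Product

lemma pi {C : ℝ≥0∞} {n : ℕ} {X : Fin n → Type*} [∀ i, PseudoMetricSpace (X i)]
    [∀ i, SecondCountableTopology (X i)] [∀ i, MeasurableSpace (X i)]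
    [∀ i, OpensMeasurableSpace (X i)] [∀ i, StandardBorelSpace (X i)] {μ : ∀ i, Measure (X i)}
    [∀ i, IsProbabilityMeasure (μ i)]
    (h : ∀ i, TransportEntropyIneq C (fun x y => dist x y ^ 2) (μ i)) :
    TransportEntropyIneq C (fun x y => ∑ i, dist (x i) (y i) ^ 2) (Measure.pi μ) := by
  induction n with
  | zero =>
    intro ν _
    calc optCost (fun x y => ∑ i, dist (x i) (y i) ^ 2) ν (Measure.pi μ)
        ≤ ∫⁻ p, ENNReal.ofReal (∑ i, dist (p.1 i) (p.2 i) ^ 2) ∂(ν.prod (Measure.pi μ)) :=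
          optCost_le (by simp) (by simp)
      _ = 0 := by simp
      _ ≤ C * relEntropy ν (Measure.pi μ) := zero_le
  | succ n ih =>
    have htail : Measurable (Function.uncurry fun x y : ∀ i, X (Fin.succAbove 0 i) =>
        ∑ i, dist (x i) (y i) ^ 2) :=
      Finset.measurable_fun_sum _ fun i _ => (Measurable.dist
        ((measurable_pi_apply i).comp measurable_fst)
        ((measurable_pi_apply i).comp measurable_snd)).pow_const 2
    have hcost : ∀ p p' : X 0 × ∀ i, X (Fin.succAbove 0 i),
        ∑ i, dist ((MeasurableEquiv.piFinSuccAbove X 0).symm p i)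
          ((MeasurableEquiv.piFinSuccAbove X 0).symm p' i) ^ 2 =
        dist p.1 p'.1 ^ 2 + ∑ i, dist (p.2 i) (p'.2 i) ^ 2 := by
      intro p p'
      rw [Fin.sum_univ_succAbove _ 0]
      rfl
    have hprod := (h 0).prod (ih fun i => h (Fin.succAbove 0 i)) htail
    rw [← (measurePreserving_piFinSuccAbove μ 0).symm.map_eq]
    refine map_equiv _ ?_
    simpa only [hcost] using hprod

end TransportEntropyIneq

section Concentration

lemma sq_lintegral_le_lintegral_sq {X : Type*} [MeasurableSpace X] (μ : Measure X)
    [IsProbabilityMeasure μ] {f : X → ℝ≥0∞} (hf : AEMeasurable f μ) :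
    (∫⁻ x, f x ∂μ) ^ 2 ≤ ∫⁻ x, f x ^ 2 ∂μ := by
  have h := ENNReal.lintegral_mul_le_Lp_mul_Lq μ .two_two hf (aemeasurable_const (b := 1))
  simp only [Pi.mul_apply, mul_one, ENNReal.rpow_two, one_pow, lintegral_const, measure_univ,
    ENNReal.one_rpow] at h
  calc (∫⁻ x, f x ∂μ) ^ 2 ≤ ((∫⁻ x, f x ^ 2 ∂μ) ^ (1 / 2 : ℝ)) ^ 2 := by gcongr
    _ = ∫⁻ x, f x ^ 2 ∂μ := by
        rw [← ENNReal.rpow_natCast, ← ENNReal.rpow_mul]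
        norm_num

lemma le_exp_neg_sq_div_of_le_sqrt {C t a : ℝ} (hC : 0 < C) (ht : 0 ≤ t) (ha : 0 < a)
    (ha_one : a ≤ 1) (h : t ≤ √(C * Real.log a⁻¹)) : a ≤ Real.exp (-t ^ 2 / C) := by
  have hlog : 0 ≤ C * Real.log a⁻¹ :=
    mul_nonneg hC.le (Real.log_nonneg ((one_le_inv₀ ha).2 ha_one))
  have hsq : t ^ 2 ≤ C * Real.log a⁻¹ := (Real.le_sqrt ht hlog).1 h
  rw [Real.log_inv] at hsq
  rw [← Real.log_le_iff_le_exp ha, le_div_iff₀ hC]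
  linarith

variable {X : Type*} [PseudoMetricSpace X] [MeasurableSpace X]

lemma lintegral_le_lintegral_add_of_optCost_dist_sq_le [SecondCountableTopology X]
    [OpensMeasurableSpace X] {ν μ : Measure X} [IsProbabilityMeasure ν] {φ : X → ℝ≥0∞}
    (hφ : Measurable φ) (hφ_lip : ∀ x y, φ x ≤ φ y + edist x y) {s : ℝ≥0∞}
    (hs : optCost (fun x y => dist x y ^ 2) ν μ ≤ s ^ 2) :
    ∫⁻ x, φ x ∂ν ≤ ∫⁻ x, φ x ∂μ + s := by
  rw [← tsub_le_iff_left, ← ENNReal.pow_le_pow_left_iff two_ne_zero]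
  refine (le_iInf₂ fun π hπ => ?_).trans hs
  have : IsProbabilityMeasure (π.map Prod.fst) := hπ.1.symm ▸ inferInstance
  have : IsProbabilityMeasure π := Measure.isProbabilityMeasure_of_map Prod.fst
  have hW₁ : ∫⁻ x, φ x ∂ν ≤ ∫⁻ x, φ x ∂μ + ∫⁻ p, edist p.1 p.2 ∂π := by
    rw [← hπ.1, ← hπ.2, lintegral_map hφ measurable_fst, lintegral_map hφ measurable_snd,
      ← lintegral_add_left (show Measurable fun p : X × X => φ p.2 by fun_prop)]
    exact lintegral_mono fun p => hφ_lip p.1 p.2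
  calc (∫⁻ x, φ x ∂ν - ∫⁻ x, φ x ∂μ) ^ 2
      ≤ (∫⁻ p, edist p.1 p.2 ∂π) ^ 2 := by
        gcongr
        exact tsub_le_iff_left.2 hW₁
    _ ≤ ∫⁻ p, edist p.1 p.2 ^ 2 ∂π := sq_lintegral_le_lintegral_sq π (by fun_prop)
    _ = ∫⁻ p, ENNReal.ofReal (dist p.1 p.2 ^ 2) ∂π := by
        simp only [edist_dist, ENNReal.ofReal_pow dist_nonneg]

namespace TransportEntropyIneq

lemma optCost_cond_le {X : Type*} [MeasurableSpace X] {C : ℝ} {c : X → X → ℝ} {μ : Measure X}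
    [IsProbabilityMeasure μ] (h : TransportEntropyIneq (ENNReal.ofReal C) c μ) {A : Set X}
    (hA : MeasurableSet A) (hμA : μ A ≠ 0) :
    optCost c μ[|A] μ ≤ ENNReal.ofReal √(C * Real.log (μ.real A)⁻¹) ^ 2 := by
  have : IsProbabilityMeasure μ[|A] := cond_isProbabilityMeasure hμA
  have hlog : 0 ≤ Real.log (μ.real A)⁻¹ :=
    Real.log_nonneg <|
      (one_le_inv₀ (ENNReal.toReal_pos hμA (measure_ne_top μ A))).2 measureReal_le_one
  calc optCost c μ[|A] μ ≤ ENNReal.ofReal (C * Real.log (μ.real A)⁻¹) := by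
        rw [ENNReal.ofReal_mul' hlog, ← klDiv_cond μ hA hμA]
        exact h.optCost_le_mul_klDiv _
    _ ≤ ENNReal.ofReal √(C * Real.log (μ.real A)⁻¹) ^ 2 := by
        rw [← ENNReal.ofReal_pow (Real.sqrt_nonneg _)]
        exact ENNReal.ofReal_le_ofReal ((le_max_left _ 0).trans_eq Real.sq_sqrt'.symm)

variable {C : ℝ} {μ : Measure X} [IsProbabilityMeasure μ]

lemma le_sqrt_log_add_sqrt_log [SecondCountableTopology X] [OpensMeasurableSpace X]
    (h : TransportEntropyIneq (ENNReal.ofReal C) (fun x y => dist x y ^ 2) μ) {A B : Set X}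
    (hA : MeasurableSet A) (hB : MeasurableSet B) (hμA : μ A ≠ 0) (hμB : μ B ≠ 0) {r : ℝ}
    (hr : ∀ x ∈ B, ENNReal.ofReal r ≤ Metric.infEDist x A) :
    r ≤ √(C * Real.log (μ.real A)⁻¹) + √(C * Real.log (μ.real B)⁻¹) := by
  have : IsProbabilityMeasure μ[|A] := cond_isProbabilityMeasure hμA
  have : IsProbabilityMeasure μ[|B] := cond_isProbabilityMeasure hμB
  have hA_zero : ∫⁻ x, Metric.infEDist x A ∂μ[|A] = 0 := by
    rw [lintegral_eq_zero_iff measurable_infEDist]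
    exact (ae_cond_mem hA).mono fun x hx => Metric.infEDist_zero_of_mem hx
  rw [← ENNReal.ofReal_le_ofReal_iff (by positivity),
    ENNReal.ofReal_add (by positivity) (by positivity)]
  calc ENNReal.ofReal r
      = ∫⁻ _, ENNReal.ofReal r ∂μ[|B] := by rw [lintegral_const, measure_univ, mul_one]
    _ ≤ ∫⁻ x, Metric.infEDist x A ∂μ[|B] := lintegral_mono_ae ((ae_cond_mem hB).mono hr)
    _ ≤ ∫⁻ x, Metric.infEDist x A ∂μ + ENNReal.ofReal √(C * Real.log (μ.real B)⁻¹) :=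
        lintegral_le_lintegral_add_of_optCost_dist_sq_le measurable_infEDist
          (fun _ _ => Metric.infEDist_le_infEDist_add_edist) (h.optCost_cond_le hB hμB)
    _ ≤ ENNReal.ofReal √(C * Real.log (μ.real A)⁻¹)
          + ENNReal.ofReal √(C * Real.log (μ.real B)⁻¹) := by
        gcongr
        rw [← zero_add (ENNReal.ofReal _), ← hA_zero]
        refine lintegral_le_lintegral_add_of_optCost_dist_sq_le measurable_infEDist
          (fun _ _ => Metric.infEDist_le_infEDist_add_edist) ?_
        rw [optCost_comm fun x y => by rw [dist_comm]]
        exact h.optCost_cond_le hA hμA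

lemma one_sub_exp_le_measure_cthickening [SecondCountableTopology X] [OpensMeasurableSpace X]
    (h : TransportEntropyIneq (ENNReal.ofReal C) (fun x y => dist x y ^ 2) μ) (hC : 0 < C)
    {A : Set X} (hA : MeasurableSet A) (hμA : 1 / 2 ≤ μ A) {r : ℝ} (hr : √(C * Real.log 2) ≤ r) :
    1 - ENNReal.ofReal (Real.exp (-(r - √(C * Real.log 2)) ^ 2 / C)) ≤
      μ (Metric.cthickening r A) := by
  set B := (Metric.cthickening r A)ᶜ
  have hB : MeasurableSet B := Metric.isClosed_cthickening.measurableSet.compl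
  rw [tsub_le_iff_right, ← prob_add_prob_compl (μ := μ) hB.of_compl]
  gcongr
  obtain hμB | hμB := eq_or_ne (μ B) 0
  · exact hμB.trans_le zero_le
  have hμA_inv : (μ.real A)⁻¹ ≤ 2 := by
    have : (1 / 2 : ℝ) ≤ μ.real A := by
      simpa [measureReal_def] using ENNReal.toReal_mono (measure_ne_top μ A) hμA
    rw [inv_le_comm₀ (by linarith) two_pos]
    linarith
  have hμA_ne : μ A ≠ 0 := fun h0 => by simp [h0] at hμA
  have hμA_pos : 0 < μ.real A := ENNReal.toReal_pos hμA_ne (measure_ne_top μ A)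
  have hμB_pos : 0 < μ.real B := ENNReal.toReal_pos hμB (measure_ne_top μ B)
  have hdist : ∀ x ∈ B, ENNReal.ofReal r ≤ Metric.infEDist x A := fun x hx =>
    (not_le.1 fun hle => hx (Metric.mem_cthickening_iff.2 hle)).le
  have hr_sub : r - √(C * Real.log 2) ≤ √(C * Real.log (μ.real B)⁻¹) := by
    calc r - √(C * Real.log 2)
        ≤ √(C * Real.log (μ.real A)⁻¹) + √(C * Real.log (μ.real B)⁻¹) - √(C * Real.log 2) := by
          gcongr
          exact h.le_sqrt_log_add_sqrt_log hA hB hμA_ne hμB hdist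
      _ ≤ √(C * Real.log 2) + √(C * Real.log (μ.real B)⁻¹) - √(C * Real.log 2) := by gcongr
      _ = √(C * Real.log (μ.real B)⁻¹) := by ring
  rw [← ofReal_measureReal]
  exact ENNReal.ofReal_le_ofReal
    (le_exp_neg_sq_div_of_le_sqrt hC (sub_nonneg.2 hr) hμB_pos measureReal_le_one hr_sub)

end TransportEntropyIneq

end Concentration

section EuclideanProduct

lemma dist_toLp_two {ι : Type*} [Fintype ι] {X : ι → Type*} [∀ i, PseudoMetricSpace (X i)]
    (x y : ∀ i, X i) : dist (WithLp.toLp 2 x) (WithLp.toLp 2 y) = √(∑ i, dist (x i) (y i) ^ 2) := by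
  rw [PiLp.dist_eq_sum (by norm_num), Real.sqrt_eq_rpow]
  simp

lemma l2ProdDist_eq_dist_toLp {X : Type*} [MetricSpace X] {n : ℕ} (x y : Fin n → X) :
    l2ProdDist x y = dist (WithLp.toLp 2 x) (WithLp.toLp 2 y) :=
  (dist_toLp_two x y).symm

lemma sInf_image_dist_eq_infDist_image {X Y : Type*} [PseudoMetricSpace Y] (y : Y) (f : X → Y)
    (s : Set X) : sInf ((fun x => dist y (f x)) '' s) = Metric.infDist y (f '' s) := by
  rw [Metric.infDist_eq_iInf, ← sInf_image', Set.image_image]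

lemma cthickening_subset_infDist_le {X : Type*} [PseudoMetricSpace X] {r : ℝ} (hr : 0 ≤ r)
    (s : Set X) : Metric.cthickening r s ⊆ {x | Metric.infDist x s ≤ r} := fun _ hx =>
  ENNReal.toReal_le_of_le_ofReal hr (Metric.mem_cthickening_iff.1 hx)

end EuclideanProduct

theorem dimension_free_gaussian_concentration_of_T2_general {n : ℕ} {X : Fin n → Type*}
    [∀ i, PseudoMetricSpace (X i)] [∀ i, SecondCountableTopology (X i)]
    [∀ i, MeasurableSpace (X i)] [∀ i, BorelSpace (X i)] [∀ i, StandardBorelSpace (X i)]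
    {C : ℝ} (hC : 0 < C) {μ : ∀ i, Measure (X i)} [∀ i, IsProbabilityMeasure (μ i)]
    (hμ : ∀ i, TransportEntropyIneq (ENNReal.ofReal C) (fun x y => dist x y ^ 2) (μ i)) :
    TransportEntropyIneq (ENNReal.ofReal C)
        (fun x y => dist (WithLp.toLp 2 x) (WithLp.toLp 2 y) ^ 2) (Measure.pi μ) ∧
      ∀ A : Set (∀ i, X i), MeasurableSet A → 1 / 2 ≤ Measure.pi μ A →
        ∀ r : ℝ, √(C * Real.log 2) ≤ r →
          1 - ENNReal.ofReal (Real.exp (-(r - √(C * Real.log 2)) ^ 2 / C)) ≤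
            Measure.pi μ
              {x | Metric.infDist (WithLp.toLp 2 x) (WithLp.toLp 2 '' A) ≤ r} := by
  have hpi : TransportEntropyIneq (ENNReal.ofReal C)
      (fun x y => dist (WithLp.toLp 2 x) (WithLp.toLp 2 y) ^ 2) (Measure.pi μ) := by
    have hsq : ∀ x y : ∀ i, X i,
        dist (WithLp.toLp 2 x) (WithLp.toLp 2 y) ^ 2 = ∑ i, dist (x i) (y i) ^ 2 := fun x y => by
      rw [dist_toLp_two, Real.sq_sqrt (by positivity)]
    simpa only [hsq] using TransportEntropyIneq.pi hμ
  refine ⟨hpi, fun A hA hμA r hr => ?_⟩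
  let e : (∀ i, X i) ≃ᵐ PiLp 2 X := MeasurableEquiv.toLp 2 (∀ i, X i)
  have : IsProbabilityMeasure ((Measure.pi μ).map e) :=
    Measure.isProbabilityMeasure_map e.measurable.aemeasurable
  have hmap : TransportEntropyIneq (ENNReal.ofReal C) (fun x y => dist x y ^ 2)
      ((Measure.pi μ).map e) := TransportEntropyIneq.map_equiv e hpi
  have hconc := hmap.one_sub_exp_le_measure_cthickening hC (e.measurableSet_image.2 hA)
    (by rwa [e.map_apply, e.preimage_image]) hr
  rw [e.map_apply] at hconc
  exact hconc.trans <| measure_mono <| Set.preimage_mono <|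
    cthickening_subset_infDist_le ((Real.sqrt_nonneg _).trans hr) _

/-- Dimension-free Gaussian concentration from `T₂`: if `μ` satisfies
`W₂²(ν,μ) ≤ C H(ν|μ)` for all `ν`, then for every `n ≥ 1`:
(i) `μⁿ` satisfies `T₂(C)` on `(𝒳ⁿ, d₂)`, and
(ii) every Borel `A ⊆ 𝒳ⁿ` with `μⁿ(A) ≥ 1/2` satisfies
`μⁿ(Aʳ) ≥ 1 − exp(−(r−r₀)²/C)` for `r ≥ r₀ = √(C log 2)`, where
`Aʳ = {x | inf_{y ∈ A} d₂(x,y) ≤ r}`. -/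
theorem dimension_free_gaussian_concentration_of_T2
    {X : Type*} [MetricSpace X] [CompleteSpace X] [TopologicalSpace.SeparableSpace X]
    [MeasurableSpace X] [BorelSpace X]
    (C : ℝ) (hC : 0 < C)
    (μ : Measure X) [IsProbabilityMeasure μ]
    (hT2 : ∀ ν : Measure X, IsProbabilityMeasure ν →
      optCost (fun x y => dist x y ^ 2) ν μ ≤ ENNReal.ofReal C * relEntropy ν μ)
    (n : ℕ) (hn : 1 ≤ n) :
    (∀ ν : Measure (Fin n → X), IsProbabilityMeasure ν →
        optCost (fun x y => l2ProdDist x y ^ 2) ν (Measure.pi fun _ : Fin n => μ) ≤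
          ENNReal.ofReal C * relEntropy ν (Measure.pi fun _ : Fin n => μ)) ∧
      (∀ A : Set (Fin n → X), MeasurableSet A →
        (1 / 2 : ℝ≥0∞) ≤ (Measure.pi fun _ : Fin n => μ) A →
        ∀ r : ℝ, Real.sqrt (C * Real.log 2) ≤ r →
          1 - ENNReal.ofReal (Real.exp (-(r - Real.sqrt (C * Real.log 2)) ^ 2 / C)) ≤
            (Measure.pi fun _ : Fin n => μ)
              {x | sInf ((fun y => l2ProdDist x y) '' A) ≤ r}) := by
  have : SecondCountableTopology X := UniformSpace.secondCountable_of_separable X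
  simp only [l2ProdDist_eq_dist_toLp, sInf_image_dist_eq_infDist_image]
  exact dimension_free_gaussian_concentration_of_T2_general hC fun _ => hT2
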